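/- Let φ be an N-function satisfying the δ₂ condition near zero. Then the nonsquare constant of the noncommutative Orlicz sequence space S_φ(H) (with the Luxemburg norm) satisfies J(S_φ) ≥ max{(α_φ)^{−1}, 2β_φ}, where α_φ = liminf_{u→0} φ^{−1}(u)/φ^{−1}(2u) and β_φ = limsup_{u→0} φ^{−1}(u)/φ^{−1}(2u). -/

import Mathlib

open scoped InnerProductSpace ENNReal Topology
open Filter

/-- An Orlicz function (N-function): convex, nondecreasing and continuous on `[0, ∞)`,
vanishing at `0`, positive on `(0, ∞)` and tending to `∞` at `∞`. -/
structure OrliczFunction : Type where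
  toFun : ℝ → ℝ
  convexOn : ConvexOn ℝ (Set.Ici (0 : ℝ)) toFun
  monotoneOn : MonotoneOn toFun (Set.Ici (0 : ℝ))
  continuousOn : ContinuousOn toFun (Set.Ici (0 : ℝ))
  map_zero : toFun 0 = 0
  pos : ∀ x : ℝ, 0 < x → 0 < toFun x
  tendsto_atTop : Filter.Tendsto toFun Filter.atTop Filter.atTop

/-- `ψ` is the complementary N-function of `φ`: `ψ(y) = sup {x·y − φ(x) : x ≥ 0}`. -/
def OrliczFunction.IsComplementary (φ ψ : OrliczFunction) : Prop :=
  ∀ y : ℝ, 0 ≤ y → ψ.toFun y = sSup {v : ℝ | ∃ x : ℝ, 0 ≤ x ∧ v = x * y - φ.toFun x}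

/-- `g` is the (two-sided) inverse of `f` on `[0, ∞)`, taking nonnegative values. -/
def IsOrliczInverse (g f : ℝ → ℝ) : Prop :=
  (∀ u : ℝ, 0 ≤ u → 0 ≤ g u) ∧ (∀ u : ℝ, 0 ≤ u → f (g u) = u) ∧
    ∀ u : ℝ, 0 ≤ u → g (f u) = u

variable {H : Type} [NormedAddCommGroup H] [InnerProductSpace ℂ H] [CompleteSpace H]

/-- The `n`-th singular value of an operator `T` (indexed from `n = 0`), described as the
`n`-th approximation number: the distance from `T` to the operators of rank `≤ n`.  For a
compact operator on a Hilbert space this is exactly the `(n+1)`-st eigenvalue of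
`|T| = (T*T)^(1/2)` in decreasing order. -/
noncomputable def sValue (T : H →L[ℂ] H) (n : ℕ) : ℝ :=
  sInf {c : ℝ | ∃ F : H →L[ℂ] H,
    Module.rank ℂ (LinearMap.range F.toLinearMap) ≤ (n : Cardinal) ∧ c = ‖T - F‖}

/-- `tr(φ(|T|)) = Σ_n φ(s_n(T))`. -/
noncomputable def orliczSum (φ : OrliczFunction) (T : H →L[ℂ] H) : ℝ :=
  ∑' n : ℕ, φ.toFun (sValue T n)

/-- Membership in the noncommutative Orlicz sequence space `S_φ(H)`:
`T` is compact and `Σ_n φ(λ s_n(T)) < ∞` for some `λ > 0`. -/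
def MemS (φ : OrliczFunction) (T : H →L[ℂ] H) : Prop :=
  IsCompactOperator (⇑T) ∧
    ∃ l : ℝ, 0 < l ∧ Summable fun n : ℕ => φ.toFun (l * sValue T n)

/-- The Luxemburg norm `‖T‖_(φ) = inf {λ > 0 : Σ_n φ(s_n(T)/λ) ≤ 1}`. -/
noncomputable def luxNorm (φ : OrliczFunction) (T : H →L[ℂ] H) : ℝ :=
  sInf {l : ℝ | 0 < l ∧ (Summable fun n : ℕ => φ.toFun (sValue T n / l)) ∧
    ∑' n : ℕ, φ.toFun (sValue T n / l) ≤ 1}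

/-- The Orlicz norm `‖T‖_φ = sup {tr |TB| : tr(ψ(B)) ≤ 1}`, expressed through the
complementary function `ψ` of `φ` (here `tr|TB| = Σ_n s_n(TB)`). -/
noncomputable def orlNormVia (ψ : OrliczFunction) (T : H →L[ℂ] H) : ℝ :=
  sSup {c : ℝ | ∃ B : H →L[ℂ] H, IsCompactOperator (⇑B) ∧
    (Summable fun n : ℕ => ψ.toFun (sValue B n)) ∧
    (∑' n : ℕ, ψ.toFun (sValue B n)) ≤ 1 ∧ c = ∑' n : ℕ, sValue (T ∘L B) n}

/-- The norm `‖T‖_((φ),p) = (‖T₁‖_(φ₁)^p + ‖T₂‖_(φ₂)^p)^(1/p)` on 2-tuples. -/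
noncomputable def luxNorm2 (φ₁ φ₂ : OrliczFunction) (p : ℝ) (T₁ T₂ : H →L[ℂ] H) : ℝ :=
  (luxNorm φ₁ T₁ ^ p + luxNorm φ₂ T₂ ^ p) ^ (1 / p)

/-- The Orlicz-type norm `‖T‖_(φ,p) = (‖T₁‖_φ₁^p + ‖T₂‖_φ₂^p)^(1/p)` on 2-tuples,
where the Orlicz norms are computed via the complementary functions `ψ₁, ψ₂`. -/
noncomputable def orlNorm2 (ψ₁ ψ₂ : OrliczFunction) (p : ℝ) (T₁ T₂ : H →L[ℂ] H) : ℝ :=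
  (orlNormVia ψ₁ T₁ ^ p + orlNormVia ψ₂ T₂ ^ p) ^ (1 / p)

/-- 2-tuple Luxemburg norm for an exponent `r ∈ [1, ∞]`. -/
noncomputable def luxNorm2E (φ₁ φ₂ : OrliczFunction) (r : ℝ≥0∞) (T₁ T₂ : H →L[ℂ] H) : ℝ :=
  if r = ⊤ then max (luxNorm φ₁ T₁) (luxNorm φ₂ T₂)
  else (luxNorm φ₁ T₁ ^ r.toReal + luxNorm φ₂ T₂ ^ r.toReal) ^ (1 / r.toReal)

/-- The trace of an operator, computed along a Hilbert basis. -/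
noncomputable def traceAlong {ι : Type} (b : HilbertBasis ι ℂ H) (T : H →L[ℂ] H) : ℂ :=
  ∑' i : ι, ⟪b i, T (b i)⟫_ℂ

/-- The Schatten `p`-norm `‖T‖_p = (Σ_n s_n(T)^p)^(1/p)`. -/
noncomputable def schattenNorm (p : ℝ) (T : H →L[ℂ] H) : ℝ :=
  (∑' n : ℕ, sValue T n ^ p) ^ (1 / p)

/-- Membership in the Schatten class `S_p(H)`. -/
def MemSp (p : ℝ) (T : H →L[ℂ] H) : Prop :=
  IsCompactOperator (⇑T) ∧ Summable fun n : ℕ => sValue T n ^ p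

/-- The nonsquare constant `J` of the noncommutative Orlicz space `S_φ(H)`
(with the Luxemburg norm). -/
noncomputable def JOrlicz (φ : OrliczFunction) : ℝ :=
  sSup {c : ℝ | ∃ T B : H →L[ℂ] H, MemS φ T ∧ MemS φ B ∧
    luxNorm φ T = 1 ∧ luxNorm φ B = 1 ∧
    c = min (luxNorm φ (T + B)) (luxNorm φ (T - B))}

/-- The von Neumann–Jordan constant of `S_φ(H)` (with the Luxemburg norm): the smallest
`c > 0` such that `1/c ≤ (‖x+y‖² + ‖x−y‖²)/(2(‖x‖² + ‖y‖²)) ≤ c` for all `x, y` in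
`S_φ(H)` not both zero. -/
noncomputable def cNJOrlicz (φ : OrliczFunction) : ℝ :=
  sInf {c : ℝ | 0 < c ∧ ∀ T B : H →L[ℂ] H, MemS φ T → MemS φ B → ¬(T = 0 ∧ B = 0) →
    1 / c ≤ (luxNorm φ (T + B) ^ 2 + luxNorm φ (T - B) ^ 2) /
        (2 * (luxNorm φ T ^ 2 + luxNorm φ B ^ 2)) ∧
      (luxNorm φ (T + B) ^ 2 + luxNorm φ (T - B) ^ 2) /
        (2 * (luxNorm φ T ^ 2 + luxNorm φ B ^ 2)) ≤ c}

/-- The von Neumann–Jordan constant of the Schatten class `S_p(H)`. -/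
noncomputable def cNJSchatten (p : ℝ) : ℝ :=
  sInf {c : ℝ | 0 < c ∧ ∀ T B : H →L[ℂ] H, MemSp p T → MemSp p B → ¬(T = 0 ∧ B = 0) →
    1 / c ≤ (schattenNorm p (T + B) ^ 2 + schattenNorm p (T - B) ^ 2) /
        (2 * (schattenNorm p T ^ 2 + schattenNorm p B ^ 2)) ∧
      (schattenNorm p (T + B) ^ 2 + schattenNorm p (T - B) ^ 2) /
        (2 * (schattenNorm p T ^ 2 + schattenNorm p B ^ 2)) ≤ c}

set_option linter.unusedSectionVars false

namespace OrliczFunction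

theorem smul_le (φ : OrliczFunction) {t x : ℝ} (ht : 0 ≤ t) (ht1 : t ≤ 1) (hx : 0 ≤ x) :
    φ.toFun (t * x) ≤ t * φ.toFun x := by
  have h := φ.convexOn.2 (x := x) (y := 0) hx (Set.self_mem_Ici) ht (sub_nonneg.2 ht1)
    (add_sub_cancel t 1)
  simpa [φ.map_zero] using h

theorem mono (φ : OrliczFunction) {x y : ℝ} (hx : 0 ≤ x) (hxy : x ≤ y) :
    φ.toFun x ≤ φ.toFun y :=
  φ.monotoneOn hx (hx.trans hxy) hxy

theorem nonneg (φ : OrliczFunction) {x : ℝ} (hx : 0 ≤ x) : 0 ≤ φ.toFun x :=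
  φ.map_zero ▸ φ.mono le_rfl hx

end OrliczFunction

namespace IsOrliczInverse

variable {φ : OrliczFunction} {g : ℝ → ℝ}

theorem mono (hg : IsOrliczInverse g φ.toFun) {u v : ℝ} (hu : 0 ≤ u) (huv : u ≤ v) :
    g u ≤ g v := by
  have hv := hu.trans huv
  by_contra! h
  have h1 := φ.mono (hg.1 v hv) h.le
  rw [hg.2.1 v hv, hg.2.1 u hu] at h1
  exact h.ne (by rw [le_antisymm huv h1])

theorem pos (hg : IsOrliczInverse g φ.toFun) {u : ℝ} (hu : 0 < u) : 0 < g u := by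
  refine (hg.1 u hu.le).lt_of_ne fun h => hu.ne ?_
  have h1 := hg.2.1 u hu.le
  rwa [← h, φ.map_zero] at h1

theorem smul_le (hg : IsOrliczInverse g φ.toFun) {t u : ℝ} (ht : 0 ≤ t) (ht1 : t ≤ 1)
    (hu : 0 ≤ u) : t * g u ≤ g (t * u) := by
  have hgu := hg.1 u hu
  have h := φ.smul_le ht ht1 hgu
  rw [hg.2.1 u hu] at h
  have h2 := hg.mono (φ.nonneg (mul_nonneg ht hgu)) h
  rwa [hg.2.2 _ (mul_nonneg ht hgu)] at h2

theorem le_iff (hg : IsOrliczInverse g φ.toFun) {x u : ℝ} (hx : 0 ≤ x) (hu : 0 ≤ u) :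
    φ.toFun x ≤ u ↔ x ≤ g u := by
  constructor
  · intro h
    have := hg.mono (φ.nonneg hx) h
    rwa [hg.2.2 x hx] at this
  · intro h
    have := φ.mono hx h
    rwa [hg.2.1 u hu] at this

end IsOrliczInverse

section SingularValues

theorem sValue_bddBelow (T : H →L[ℂ] H) (n : ℕ) :
    BddBelow {c : ℝ | ∃ F : H →L[ℂ] H,
      Module.rank ℂ (LinearMap.range F.toLinearMap) ≤ (n : Cardinal) ∧ c = ‖T - F‖} :=
  ⟨0, by rintro _ ⟨F, -, rfl⟩; exact norm_nonneg _⟩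

theorem norm_mem_sValue_set (T : H →L[ℂ] H) (n : ℕ) :
    ‖T‖ ∈ {c : ℝ | ∃ F : H →L[ℂ] H,
      Module.rank ℂ (LinearMap.range F.toLinearMap) ≤ (n : Cardinal) ∧ c = ‖T - F‖} :=
  ⟨0, by simp, by simp⟩

theorem sValue_le (T : H →L[ℂ] H) {n : ℕ} {F : H →L[ℂ] H}
    (hF : Module.rank ℂ (LinearMap.range F.toLinearMap) ≤ (n : Cardinal)) :
    sValue T n ≤ ‖T - F‖ :=
  csInf_le (sValue_bddBelow T n) ⟨F, hF, rfl⟩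

theorem le_sValue (T : H →L[ℂ] H) {n : ℕ} {a : ℝ}
    (h : ∀ F : H →L[ℂ] H,
      Module.rank ℂ (LinearMap.range F.toLinearMap) ≤ (n : Cardinal) → a ≤ ‖T - F‖) :
    a ≤ sValue T n :=
  le_csInf ⟨_, norm_mem_sValue_set T n⟩ (by rintro _ ⟨F, hF, rfl⟩; exact h F hF)

theorem sValue_nonneg (T : H →L[ℂ] H) (n : ℕ) : 0 ≤ sValue T n :=
  le_sValue T fun _ _ => norm_nonneg _

theorem sValue_le_norm (T : H →L[ℂ] H) (n : ℕ) : sValue T n ≤ ‖T‖ :=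
  csInf_le (sValue_bddBelow T n) (norm_mem_sValue_set T n)

theorem sValue_antitone (T : H →L[ℂ] H) : Antitone (sValue T) := fun _ _ h =>
  le_sValue T fun _ hF => sValue_le T (hF.trans (by exact_mod_cast h))

theorem sValue_add_le (S T : H →L[ℂ] H) (m n : ℕ) :
    sValue (S + T) (m + n) ≤ sValue S m + sValue T n := by
  rw [← sub_le_iff_le_add]
  refine le_sValue S fun F hF => ?_
  rw [sub_le_comm]
  refine le_sValue T fun G hG => ?_
  rw [sub_le_iff_le_add']
  refine (sValue_le (S + T) (F := F + G) ?_).trans ?_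
  · push_cast
    exact (LinearMap.rank_add_le F.toLinearMap G.toLinearMap).trans (add_le_add hF hG)
  · rw [add_sub_add_comm]
    exact norm_add_le _ _

/-- If the Luxemburg norm of `T` is nonzero and less than `l`, then `l` is admissible in the infimum defining the Luxemburg norm. -/
theorem summable_and_tsum_le_one_of_luxNorm_lt (φ : OrliczFunction) {T : H →L[ℂ] H} {l : ℝ}
    (h0 : luxNorm φ T ≠ 0) (h : luxNorm φ T < l) :
    (Summable fun n : ℕ => φ.toFun (sValue T n / l)) ∧
      ∑' n : ℕ, φ.toFun (sValue T n / l) ≤ 1 := by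
  have hne : {l : ℝ | 0 < l ∧ (Summable fun n : ℕ => φ.toFun (sValue T n / l)) ∧
      ∑' n : ℕ, φ.toFun (sValue T n / l) ≤ 1}.Nonempty := by
    by_contra hempty
    rw [Set.not_nonempty_iff_eq_empty] at hempty
    exact h0 (by rw [luxNorm, hempty, Real.sInf_empty])
  obtain ⟨r, ⟨hr, hsum, hle⟩, hrl⟩ := exists_lt_of_csInf_lt hne h
  have hl := hr.trans hrl
  have hterm : ∀ n, φ.toFun (sValue T n / l) ≤ φ.toFun (sValue T n / r) := fun n =>
    φ.mono (div_nonneg (sValue_nonneg T n) hl.le)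
      (div_le_div_of_nonneg_left (sValue_nonneg T n) hr hrl.le)
  have hs := hsum.of_nonneg_of_le
    (fun n => φ.nonneg (div_nonneg (sValue_nonneg T n) hl.le)) hterm
  exact ⟨hs, (hs.tsum_le_tsum hterm hsum).trans hle⟩

theorem luxNorm_add_le_eight (φ : OrliczFunction) {S T : H →L[ℂ] H}
    (hS : luxNorm φ S = 1) (hT : luxNorm φ T = 1) : luxNorm φ (S + T) ≤ 8 := by
  obtain ⟨sS, tS⟩ := summable_and_tsum_le_one_of_luxNorm_lt φ (T := S) (l := 2)
    (by simp [hS]) (by norm_num [hS])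
  obtain ⟨sT, tT⟩ := summable_and_tsum_le_one_of_luxNorm_lt φ (T := T) (l := 2)
    (by simp [hT]) (by norm_num [hT])
  set f : ℕ → ℝ := fun n => φ.toFun (sValue (S + T) n / 8) with hf
  set h : ℕ → ℝ := fun n =>
    1 / 4 * (φ.toFun (sValue S n / 2) + φ.toFun (sValue T n / 2)) with hh
  have hs : Summable h := (sS.add sT).mul_left _
  have ht : ∑' n, h n ≤ 1 / 2 := by
    rw [hh, tsum_mul_left, sS.tsum_add sT]
    linarith
  have hf0 : ∀ n, 0 ≤ f n := fun n => φ.nonneg (div_nonneg (sValue_nonneg _ n) (by norm_num))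
  have hbound : ∀ k n, k + k ≤ n → f n ≤ h k := by
    intro k n hkn
    have h1 := ((sValue_antitone (S + T)) hkn).trans (sValue_add_le S T k k)
    have a0 := sValue_nonneg S k
    have b0 := sValue_nonneg T k
    have h2 : f n ≤ φ.toFun (1 / 2 * (1 / 2 * (sValue S k / 2) + 1 / 2 * (sValue T k / 2))) :=
      φ.mono (div_nonneg (sValue_nonneg _ n) (by norm_num)) (by linarith)
    have h3 := φ.smul_le (t := 1 / 2) (x := 1 / 2 * (sValue S k / 2) + 1 / 2 * (sValue T k / 2))
      (by norm_num) (by norm_num) (by positivity)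
    have h4 := φ.convexOn.2 (x := sValue S k / 2) (y := sValue T k / 2)
      (Set.mem_Ici.2 (by positivity)) (Set.mem_Ici.2 (by positivity))
      (by norm_num : (0 : ℝ) ≤ 1 / 2) (by norm_num : (0 : ℝ) ≤ 1 / 2) (by norm_num)
    simp only [smul_eq_mul] at h4
    simp only [hh]
    linarith
  have he : ∀ k, f (2 * k) ≤ h k := fun k => hbound k _ (by omega)
  have ho : ∀ k, f (2 * k + 1) ≤ h k := fun k => hbound k _ (by omega)
  have hse : Summable fun k => f (2 * k) := hs.of_nonneg_of_le (fun _ => hf0 _) he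
  have hso : Summable fun k => f (2 * k + 1) := hs.of_nonneg_of_le (fun _ => hf0 _) ho
  have hsum : HasSum f (∑' k, f (2 * k) + ∑' k, f (2 * k + 1)) :=
    hse.hasSum.even_add_odd hso.hasSum
  refine csInf_le ⟨0, fun l hl => hl.1.le⟩ ⟨by norm_num, hsum.summable, ?_⟩
  rw [hsum.tsum_eq]
  have := hse.tsum_le_tsum he hs
  have := hso.tsum_le_tsum ho hs
  linarith

theorem JOrlicz_bddAbove (φ : OrliczFunction) :
    BddAbove {c : ℝ | ∃ T B : H →L[ℂ] H, MemS φ T ∧ MemS φ B ∧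
      luxNorm φ T = 1 ∧ luxNorm φ B = 1 ∧
      c = min (luxNorm φ (T + B)) (luxNorm φ (T - B))} := by
  refine ⟨8, ?_⟩
  rintro _ ⟨T, B, -, -, hT, hB, rfl⟩
  exact (min_le_left _ _).trans (luxNorm_add_le_eight φ hT hB)

end SingularValues

section Diagonal

/-- The finite-rank operator `x ↦ ∑ i ∈ A, c i ⟪v i, x⟫ v i`. -/
noncomputable def diagOp (v : ℕ → H) (A : Finset ℕ) (c : ℕ → ℂ) : H →L[ℂ] H :=
  ∑ i ∈ A, c i • InnerProductSpace.rankOne ℂ (v i) (v i)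

variable {v : ℕ → H} {A : Finset ℕ} {c : ℕ → ℂ} {a : ℝ}

theorem diagOp_apply (v : ℕ → H) (A : Finset ℕ) (c : ℕ → ℂ) (x : H) :
    diagOp v A c x = ∑ i ∈ A, (c i * ⟪v i, x⟫_ℂ) • v i := by
  simp [diagOp, smul_smul]

theorem diagOp_add (v : ℕ → H) (A : Finset ℕ) (c d : ℕ → ℂ) :
    diagOp v A c + diagOp v A d = diagOp v A (c + d) := by
  simp [diagOp, add_smul, Finset.sum_add_distrib]

theorem diagOp_sub (v : ℕ → H) (A : Finset ℕ) (c d : ℕ → ℂ) :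
    diagOp v A c - diagOp v A d = diagOp v A (c - d) := by
  simp [diagOp, sub_smul, Finset.sum_sub_distrib]

theorem diagOp_eq_of_subset {B : Finset ℕ} (hBA : B ⊆ A)
    (hc : ∀ i ∈ A, i ∉ B → c i = 0) : diagOp v A c = diagOp v B c :=
  (Finset.sum_subset hBA fun i hi hiB => by simp [hc i hi hiB]).symm

theorem isCompactOperator_diagOp (v : ℕ → H) (A : Finset ℕ) (c : ℕ → ℂ) :
    IsCompactOperator (diagOp v A c) := by
  have h : diagOp v A c ∈ compactOperator (RingHom.id ℂ) H H := by
    refine Submodule.sum_mem _ fun i _ => Submodule.smul_mem _ _ ?_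
    rw [InnerProductSpace.rankOne_def']
    exact (isCompactOperator_of_locallyCompactSpace_dom (innerSL ℂ (v i))).clm_comp
      (ContinuousLinearMap.toSpanSingleton ℂ (v i))
  exact h

theorem rank_range_diagOp_le (v : ℕ → H) (A : Finset ℕ) (c : ℕ → ℂ) :
    Module.rank ℂ (LinearMap.range (diagOp v A c).toLinearMap) ≤ (A.card : Cardinal) := by
  classical
  have h : LinearMap.range (diagOp v A c).toLinearMap ≤
      Submodule.span ℂ ((A.image v : Finset H) : Set H) := by
    rintro _ ⟨x, rfl⟩
    change diagOp v A c x ∈ _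
    rw [diagOp_apply]
    exact Submodule.sum_mem _ fun i hi => Submodule.smul_mem _ _
      (Submodule.subset_span (Finset.mem_coe.2 (Finset.mem_image_of_mem v hi)))
  refine (Submodule.rank_mono h).trans ((rank_span_finset_le _).trans ?_)
  exact_mod_cast Finset.card_image_le

theorem Orthonormal.norm_sq_sum_smul (hv : Orthonormal ℂ v) (A : Finset ℕ) (x : ℕ → ℂ) :
    ‖∑ i ∈ A, x i • v i‖ ^ 2 = ∑ i ∈ A, ‖x i‖ ^ 2 := by
  have h := hv.inner_sum x x A
  rw [inner_self_eq_norm_sq_to_K] at h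
  simp only [RCLike.conj_mul] at h
  exact_mod_cast h

theorem norm_diagOp_le (hv : Orthonormal ℂ v) (ha : 0 ≤ a) (hc : ∀ i ∈ A, ‖c i‖ = a) :
    ‖diagOp v A c‖ ≤ a := by
  refine ContinuousLinearMap.opNorm_le_bound _ ha fun x => ?_
  refine le_of_sq_le_sq ?_ (by positivity)
  rw [diagOp_apply, hv.norm_sq_sum_smul]
  calc ∑ i ∈ A, ‖c i * ⟪v i, x⟫_ℂ‖ ^ 2 = a ^ 2 * ∑ i ∈ A, ‖⟪v i, x⟫_ℂ‖ ^ 2 := by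
        rw [Finset.mul_sum]
        exact Finset.sum_congr rfl fun i hi => by rw [norm_mul, hc i hi, mul_pow]
    _ ≤ a ^ 2 * ‖x‖ ^ 2 := by gcongr; exact hv.sum_inner_products_le x
    _ = (a * ‖x‖) ^ 2 := by ring

theorem sValue_diagOp_of_lt (hv : Orthonormal ℂ v) (ha : 0 ≤ a) (hc : ∀ i ∈ A, ‖c i‖ = a)
    {n : ℕ} (hn : n < A.card) : sValue (diagOp v A c) n = a := by
  refine le_antisymm ((sValue_le_norm _ n).trans (norm_diagOp_le hv ha hc))
    (le_sValue _ fun F hF => ?_)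
  let L : (A → ℂ) →ₗ[ℂ] H := Fintype.linearCombination ℂ fun i : A => v i
  have : FiniteDimensional ℂ (LinearMap.range F.toLinearMap) :=
    Module.rank_lt_aleph0_iff.1 (hF.trans_lt (Cardinal.natCast_lt_aleph0))
  have hfin : Module.finrank ℂ (LinearMap.range F.toLinearMap) < Module.finrank ℂ (A → ℂ) := by
    rw [Module.finrank_fintype_fun_eq_card, Fintype.card_coe]
    exact (Module.finrank_le_of_rank_le hF).trans_lt hn
  obtain ⟨y, hy, hy0⟩ := (Submodule.ne_bot_iff _).1
    ((F.toLinearMap.rangeRestrict ∘ₗ L).ker_ne_bot_of_finrank_lt hfin)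
  have hFy : F (L y) = 0 := congrArg Subtype.val hy
  set z : ℕ → ℂ := fun i => if h : i ∈ A then y ⟨i, h⟩ else 0 with hz
  have hLz : L y = ∑ i ∈ A, z i • v i := by
    rw [← Finset.sum_coe_sort A]
    simp [L, Fintype.linearCombination_apply, hz]
  have hLnorm : ‖L y‖ ^ 2 = ∑ i ∈ A, ‖z i‖ ^ 2 := by rw [hLz, hv.norm_sq_sum_smul]
  have hTnorm : ‖diagOp v A c (L y)‖ = a * ‖L y‖ := by
    refine (sq_eq_sq₀ (norm_nonneg _) (by positivity)).1 ?_
    rw [diagOp_apply, hv.norm_sq_sum_smul, mul_pow, hLnorm, Finset.mul_sum]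
    refine Finset.sum_congr rfl fun i hi => ?_
    rw [hLz, hv.inner_right_sum z hi, norm_mul, hc i hi, mul_pow]
  have hpos : 0 < ‖L y‖ := by
    rw [norm_pos_iff]
    intro h0
    rw [h0, norm_zero, zero_pow two_ne_zero, eq_comm,
      Finset.sum_eq_zero_iff_of_nonneg fun _ _ => by positivity] at hLnorm
    refine hy0 (funext fun i => ?_)
    have := hLnorm i i.2
    simpa [hz] using this
  have h := (diagOp v A c - F).le_opNorm (L y)
  rw [sub_apply, hFy, sub_zero, hTnorm] at h
  exact le_of_mul_le_mul_right h hpos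

theorem sValue_diagOp_of_le (v : ℕ → H) (A : Finset ℕ) (c : ℕ → ℂ) {n : ℕ} (hn : A.card ≤ n) :
    sValue (diagOp v A c) n = 0 := by
  refine le_antisymm ?_ (sValue_nonneg _ n)
  simpa using sValue_le (diagOp v A c) (F := diagOp v A c)
    ((rank_range_diagOp_le v A c).trans (by exact_mod_cast hn))

theorem hasSum_orlicz_diagOp (φ : OrliczFunction) (hv : Orthonormal ℂ v) (ha : 0 ≤ a)
    (hc : ∀ i ∈ A, ‖c i‖ = a) (l : ℝ) :
    HasSum (fun n => φ.toFun (sValue (diagOp v A c) n / l)) (A.card * φ.toFun (a / l)) := by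
  have h : HasSum (fun n => φ.toFun (sValue (diagOp v A c) n / l))
      (∑ n ∈ Finset.range A.card, φ.toFun (sValue (diagOp v A c) n / l)) :=
    hasSum_sum_of_ne_finset_zero fun n hn => by
      rw [sValue_diagOp_of_le v A c (by simpa using hn), zero_div, φ.map_zero]
  rw [Finset.sum_congr rfl fun n hn => by
    rw [sValue_diagOp_of_lt hv ha hc (Finset.mem_range.1 hn)]] at h
  simpa using h

theorem memS_diagOp (φ : OrliczFunction) (hv : Orthonormal ℂ v) (ha : 0 ≤ a)
    (hc : ∀ i ∈ A, ‖c i‖ = a) : MemS φ (diagOp v A c) :=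
  ⟨isCompactOperator_diagOp v A c, 1, one_pos,
    by simpa using (hasSum_orlicz_diagOp φ hv ha hc 1).summable⟩

theorem luxNorm_diagOp {φ : OrliczFunction} {g : ℝ → ℝ} (hg : IsOrliczInverse g φ.toFun)
    (hv : Orthonormal ℂ v) (ha : 0 < a) (hc : ∀ i ∈ A, ‖c i‖ = a) (hA : 0 < A.card) :
    luxNorm φ (diagOp v A c) = a / g (1 / A.card) := by
  have hA' : (0 : ℝ) < A.card := by exact_mod_cast hA
  have hgA := hg.pos (one_div_pos.2 hA')
  have hset : {l : ℝ | 0 < l ∧ (Summable fun n : ℕ => φ.toFun (sValue (diagOp v A c) n / l)) ∧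
      ∑' n : ℕ, φ.toFun (sValue (diagOp v A c) n / l) ≤ 1} = Set.Ici (a / g (1 / A.card)) := by
    ext l
    have hs := hasSum_orlicz_diagOp φ hv ha.le hc l
    rw [Set.mem_ofPred_eq, hs.tsum_eq, Set.mem_Ici, and_iff_right hs.summable]
    have key : 0 < l → (A.card * φ.toFun (a / l) ≤ 1 ↔ a / g (1 / A.card) ≤ l) := fun hl => by
      rw [← le_div_iff₀' hA', hg.le_iff (by positivity) (by positivity), div_le_iff₀ hl,
        div_le_iff₀' hgA]
    exact ⟨fun h => (key h.1).1 h.2, fun h =>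
      have hl := (div_pos ha hgA).trans_le h
      ⟨hl, (key hl).2 h⟩⟩
  rw [luxNorm, hset, csInf_Ici]

end Diagonal

section Bounds

variable {φ : OrliczFunction} {g : ℝ → ℝ} {v : ℕ → H}

theorem le_JOrlicz_of_disjoint (hg : IsOrliczInverse g φ.toFun) (hv : Orthonormal ℂ v)
    {n : ℕ} (hn : 0 < n) :
    g (1 / n) / g (1 / (2 * n)) ≤ JOrlicz (H := H) φ := by
  have hn' : (0 : ℝ) < n := by exact_mod_cast hn
  have ha := hg.pos (one_div_pos.2 hn')
  set a := g (1 / n) with ha_def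
  set c : ℕ → ℂ := fun i => if i < n then (a : ℂ) else 0 with hc
  set d : ℕ → ℂ := fun i => if i < n then 0 else (a : ℂ) with hd
  set S := Finset.range (2 * n)
  have hS : S.card = 2 * n := Finset.card_range _
  have hS' : ((S.card : ℕ) : ℝ) = 2 * n := by rw [hS]; push_cast; rfl
  have hnorm : ‖(a : ℂ)‖ = a := by simp [abs_of_pos ha]
  have hcA : ∀ i ∈ Finset.range n, ‖c i‖ = a := fun i hi => by
    simp only [hc, if_pos (Finset.mem_range.1 hi), hnorm]
  have hdA : ∀ i ∈ Finset.Ico n (2 * n), ‖d i‖ = a := fun i hi => by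
    simp only [hd, if_neg (Finset.mem_Ico.1 hi).1.not_gt, hnorm]
  have hcS : diagOp v S c = diagOp v (Finset.range n) c :=
    diagOp_eq_of_subset (Finset.range_subset_range.2 (by omega)) fun i _ hi => by
      simp only [hc, if_neg (mt Finset.mem_range.2 hi)]
  have hdS : diagOp v S d = diagOp v (Finset.Ico n (2 * n)) d :=
    diagOp_eq_of_subset (fun i hi => Finset.mem_range.2 (Finset.mem_Ico.1 hi).2)
      fun i hi hi' => by
        have : i < n := by
          by_contra h
          exact hi' (Finset.mem_Ico.2 ⟨not_lt.1 h, Finset.mem_range.1 hi⟩)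
        simp only [hd, if_pos this]
  have hcard : (Finset.Ico n (2 * n)).card = n := by simp; omega
  refine le_csSup (JOrlicz_bddAbove φ) ⟨diagOp v S c, diagOp v S d, ?_, ?_, ?_, ?_, ?_⟩
  · rw [hcS]
    exact memS_diagOp φ hv ha.le hcA
  · rw [hdS]
    exact memS_diagOp φ hv ha.le hdA
  · rw [hcS, luxNorm_diagOp hg hv ha hcA (by simpa using hn), Finset.card_range, ← ha_def,
      div_self ha.ne']
  · rw [hdS, luxNorm_diagOp hg hv ha hdA (by omega), hcard, ← ha_def, div_self ha.ne']
  · rw [diagOp_add, diagOp_sub, luxNorm_diagOp hg hv ha _ (by omega),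
      luxNorm_diagOp hg hv ha _ (by omega), hS', min_self]
    · intro i _
      by_cases h : i < n <;> simp [hc, hd, h, abs_of_pos ha]
    · intro i _
      by_cases h : i < n <;> simp [hc, hd, h, abs_of_pos ha]

theorem le_JOrlicz_of_signs (hg : IsOrliczInverse g φ.toFun) (hv : Orthonormal ℂ v)
    {n : ℕ} (hn : 0 < n) :
    2 * g (1 / (2 * n)) / g (1 / n) ≤ JOrlicz (H := H) φ := by
  have hn' : (0 : ℝ) < n := by exact_mod_cast hn
  have ha : 0 < g (1 / (2 * n)) := hg.pos (by positivity)
  set a := g (1 / (2 * n)) with ha_def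
  set c : ℕ → ℂ := fun _ => (a : ℂ) with hc
  set d : ℕ → ℂ := fun i => if i < n then (a : ℂ) else -(a : ℂ) with hd
  set S := Finset.range (2 * n)
  have hS : S.card = 2 * n := Finset.card_range _
  have hS' : ((S.card : ℕ) : ℝ) = 2 * n := by rw [hS]; push_cast; rfl
  have hcA : ∀ i ∈ S, ‖c i‖ = a := fun i _ => by simp [hc, abs_of_pos ha]
  have hdA : ∀ i ∈ S, ‖d i‖ = a := fun i _ => by
    by_cases h : i < n <;> simp [hd, h, abs_of_pos ha]
  have hadd : diagOp v S (c + d) = diagOp v (Finset.range n) (c + d) :=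
    diagOp_eq_of_subset (Finset.range_subset_range.2 (by omega)) fun i _ hi => by
      simp [hc, hd, if_neg (mt Finset.mem_range.2 hi)]
  have hsub : diagOp v S (c - d) = diagOp v (Finset.Ico n (2 * n)) (c - d) :=
    diagOp_eq_of_subset (fun i hi => Finset.mem_range.2 (Finset.mem_Ico.1 hi).2)
      fun i hi hi' => by
        have : i < n := by
          by_contra h
          exact hi' (Finset.mem_Ico.2 ⟨not_lt.1 h, Finset.mem_range.1 hi⟩)
        simp [hc, hd, if_pos this]
  have hcard : (Finset.Ico n (2 * n)).card = n := by simp; omega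
  have hnorm : ‖(a : ℂ) + a‖ = 2 * a := by
    rw [← two_mul]
    simp [abs_of_pos ha]
  refine le_csSup (JOrlicz_bddAbove φ) ⟨diagOp v S c, diagOp v S d,
    memS_diagOp φ hv ha.le hcA, memS_diagOp φ hv ha.le hdA, ?_, ?_, ?_⟩
  · rw [luxNorm_diagOp hg hv ha hcA (by omega), hS', ← ha_def, div_self ha.ne']
  · rw [luxNorm_diagOp hg hv ha hdA (by omega), hS', ← ha_def, div_self ha.ne']
  · rw [diagOp_add, diagOp_sub, hadd, hsub,
      luxNorm_diagOp hg hv (mul_pos two_pos ha) _ (by simpa using hn),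
      luxNorm_diagOp hg hv (mul_pos two_pos ha) _ (by omega), hcard, Finset.card_range, min_self]
    · intro i hi
      simp [hc, hd, if_neg (Finset.mem_Ico.1 hi).1.not_gt, hnorm]
    · intro i hi
      simp [hc, hd, if_pos (Finset.mem_range.1 hi), hnorm]

/-- Every `u ∈ (0, 1/2)` lies in an interval `[1 / (2 (n + 1)), 1 / (2 n)]` with `n ≥ 1`. -/
theorem exists_nat_bracket {u : ℝ} (hu : 0 < u) (hu' : u < 1 / 2) :
    ∃ n : ℕ, 0 < n ∧ 2 * u * n ≤ 1 ∧ 1 < 2 * u * (n + 1) := by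
  have h2u : 0 < 2 * u := by positivity
  refine ⟨⌊1 / (2 * u)⌋₊, Nat.floor_pos.2 ?_, ?_, ?_⟩
  · rw [le_div_iff₀ h2u]
    linarith
  · have := Nat.floor_le (one_div_pos.2 h2u).le
    rwa [le_div_iff₀' h2u] at this
  · have := Nat.lt_floor_add_one (1 / (2 * u))
    rwa [div_lt_iff₀' h2u] at this

theorem IsOrliczInverse.one_sub_mul_le (hg : IsOrliczInverse g φ.toFun) {r w t : ℝ}
    (hr : 0 < r) (ht : 0 ≤ t) (ht1 : t ≤ 1) (h : (1 - t) * r ≤ w) :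
    (1 - t) * g r ≤ g w :=
  (hg.smul_le (by linarith) (by linarith) hr.le).trans
    (hg.mono (mul_nonneg (by linarith) hr.le) h)

theorem ratio_bounds (hg : IsOrliczInverse g φ.toFun) (hv : Orthonormal ℂ v)
    {u : ℝ} (hu : 0 < u) (hu' : u < 1 / 2) :
    (1 - 2 * u) / JOrlicz (H := H) φ ≤ g u / g (2 * u) ∧
      (1 - 2 * u) * (g u / g (2 * u)) ≤ JOrlicz (H := H) φ / 2 := by
  obtain ⟨n, hn, hle, hlt⟩ := exists_nat_bracket hu hu'
  have hn' : (0 : ℝ) < n := by exact_mod_cast hn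
  have h1 := le_JOrlicz_of_disjoint hg hv hn
  have h2 := le_JOrlicz_of_signs hg hv hn
  set J := JOrlicz (H := H) φ
  have g1 : 0 < g (1 / n) := hg.pos (by positivity)
  have g2 : 0 < g (1 / (2 * n)) := hg.pos (by positivity)
  have gu : 0 < g u := hg.pos hu
  have gu2 : 0 < g (2 * u) := hg.pos (by positivity)
  have hJ : 0 < J := (div_pos g1 g2).trans_le h1
  rw [div_le_iff₀ g2] at h1
  rw [div_le_iff₀ g1] at h2
  have m1 : g u ≤ g (1 / (2 * n)) := hg.mono hu.le (by
    rw [le_div_iff₀ (by positivity)]; linarith)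
  have m2 : g (2 * u) ≤ g (1 / n) := hg.mono (by positivity) (by
    rw [le_div_iff₀ hn']; exact hle)
  have l1 : (1 - 2 * u) * g (1 / (2 * n)) ≤ g u :=
    hg.one_sub_mul_le (by positivity) (by positivity) (by linarith) (by
      rw [mul_one_div, div_le_iff₀ (by positivity)]; linarith)
  have l2 : (1 - 2 * u) * g (1 / n) ≤ g (2 * u) :=
    hg.one_sub_mul_le (by positivity) (by positivity) (by linarith) (by
      rw [mul_one_div, div_le_iff₀ hn']; linarith)
  have hs : 0 ≤ 1 - 2 * u := by linarith
  constructor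
  · rw [div_le_div_iff₀ hJ gu2]
    calc (1 - 2 * u) * g (2 * u) ≤ (1 - 2 * u) * (J * g (1 / (2 * n))) := by
          gcongr; exact m2.trans h1
      _ = ((1 - 2 * u) * g (1 / (2 * n))) * J := by ring
      _ ≤ g u * J := by gcongr
  · rw [← mul_div_assoc, div_le_iff₀ gu2]
    calc (1 - 2 * u) * g u ≤ (1 - 2 * u) * (J / 2 * g (1 / n)) := by
          gcongr; linarith
      _ = J / 2 * ((1 - 2 * u) * g (1 / n)) := by ring
      _ ≤ J / 2 * g (2 * u) := by gcongr

end Bounds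

/-- if the N-function `φ` satisfies the `δ₂` condition near zero, then the
nonsquare constant of `S_φ(H)` (with the Luxemburg norm) satisfies
`J(S_φ) ≥ max {α_φ⁻¹, 2 β_φ}`, where `α_φ = liminf_{u→0⁺} φ⁻¹(u)/φ⁻¹(2u)` and
`β_φ = limsup_{u→0⁺} φ⁻¹(u)/φ⁻¹(2u)`.  (Here `H` is an infinite-dimensional separable
complex Hilbert space, witnessed by the Hilbert basis `e` indexed by `ℕ`.) -/
theorem stmt14 {H : Type} [NormedAddCommGroup H] [InnerProductSpace ℂ H]
    [CompleteSpace H] [TopologicalSpace.SeparableSpace H]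
    (e : HilbertBasis ℕ ℂ H)
    (φ : OrliczFunction)
    (hδ : ∃ u₀ : ℝ, 0 < u₀ ∧ ∃ k : ℝ, 2 < k ∧
      ∀ u : ℝ, 0 ≤ u → u ≤ u₀ → φ.toFun (2 * u) ≤ k * φ.toFun u)
    (g : ℝ → ℝ) (hg : IsOrliczInverse g φ.toFun) :
    max (Filter.liminf (fun u : ℝ => g u / g (2 * u)) (𝓝[>] (0 : ℝ)))⁻¹
        (2 * Filter.limsup (fun u : ℝ => g u / g (2 * u)) (𝓝[>] (0 : ℝ))) ≤
      JOrlicz (H := H) φ := by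
  have hv : Orthonormal ℂ (e : ℕ → H) := e.orthonormal
  have hJ : 0 < JOrlicz (H := H) φ :=
    (div_pos (hg.pos (by norm_num)) (hg.pos (by norm_num))).trans_le
      (le_JOrlicz_of_disjoint hg hv one_pos)
  set J := JOrlicz (H := H) φ
  have hsmall : ∀ᶠ u : ℝ in 𝓝[>] (0 : ℝ), 0 < u ∧ u < 1 / 2 :=
    Ioo_mem_nhdsGT (by norm_num)
  have hle1 : ∀ᶠ u : ℝ in 𝓝[>] (0 : ℝ), g u / g (2 * u) ≤ 1 := by
    filter_upwards [hsmall] with u hu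
    exact div_le_one_of_le₀ (hg.mono hu.1.le (by linarith [hu.1])) (hg.1 _ (by linarith [hu.1]))
  have hge0 : ∀ᶠ u : ℝ in 𝓝[>] (0 : ℝ), 0 ≤ g u / g (2 * u) := by
    filter_upwards [hsmall] with u hu
    exact div_nonneg (hg.1 _ hu.1.le) (hg.1 _ (by linarith [hu.1]))
  have hlim : Tendsto (fun u : ℝ => 1 - 2 * u) (𝓝[>] (0 : ℝ)) (𝓝 1) := by
    have h : Continuous fun u : ℝ => 1 - 2 * u := by fun_prop
    simpa using (h.tendsto 0).mono_left nhdsWithin_le_nhds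
  have hliminf : 1 / J ≤ liminf (fun u : ℝ => g u / g (2 * u)) (𝓝[>] (0 : ℝ)) := by
    refine le_of_forall_lt fun b hb => ?_
    obtain ⟨b', hbb', hb'⟩ := exists_between hb
    refine hbb'.trans_le (le_liminf_of_le
      (IsBoundedUnder.isCoboundedUnder_ge ⟨1, hle1⟩) ?_)
    filter_upwards [hsmall, (hlim.div_const J).eventually_const_lt hb'] with u hu hbu
    exact hbu.le.trans (ratio_bounds hg hv hu.1 hu.2).1
  have hlimsup : limsup (fun u : ℝ => g u / g (2 * u)) (𝓝[>] (0 : ℝ)) ≤ J / 2 := by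
    refine le_of_forall_gt fun b hb => ?_
    obtain ⟨b', hb', hbb'⟩ := exists_between hb
    refine (limsup_le_of_le
      (IsBoundedUnder.isCoboundedUnder_le ⟨0, hge0⟩) ?_).trans_lt hbb'
    have hlim' : Tendsto (fun u : ℝ => (1 - 2 * u) * b') (𝓝[>] (0 : ℝ)) (𝓝 b') := by
      simpa using hlim.mul_const b'
    filter_upwards [hsmall, hlim'.eventually_const_lt hb'] with u hu hbu
    have h := (ratio_bounds hg hv hu.1 hu.2).2.trans hbu.le
    exact le_of_mul_le_mul_left h (by linarith [hu.2])
  refine max_le ?_ (by linarith)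
  rw [one_div] at hliminf
  exact inv_le_of_inv_le₀ hJ hliminf
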